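/- arXiv:math/0204346 — 2 statements merged into one kernel-verified Lean document; each statement's English description precedes it below -/
import Mathlib

section
/- For triples t₁, t₂ with λ₁, λ₂, λ₁+λ₂ nonzero, the space of grading-preserving linear endomorphisms of V_{t₁}⊗V_{t₂} that commute with the super-Leibniz actions of all four operators H, D, E, F is 2-dimensional, with basis {Y_{t₁,t₂}∘L_{t₁,t₂}, Y'_{t₁,t₂}∘L'_{t₁,t₂}}. -/
open TensorProduct

noncomputable section

/-- a triple t = (λ, μ, σ) ∈ ℚ × ℚ × ℤ/2 -/
structure Triple where
  lam : ℚ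
  mu : ℚ
  sg : ZMod 2

instance : Add Triple := ⟨fun a b => ⟨a.lam + b.lam, a.mu + b.mu, a.sg + b.sg⟩⟩
instance : Neg Triple := ⟨fun a => ⟨-a.lam, -a.mu, -a.sg⟩⟩
instance : Sub Triple := ⟨fun a b => a + -b⟩

def e₂ : Triple := ⟨0, 1, 0⟩
def e₃ : Triple := ⟨0, 0, 1⟩
/-- t* = (−λ, −μ, σ+1) -/
def Triple.star (t : Triple) : Triple := ⟨-t.lam, -t.mu, t.sg + 1⟩

/-- the underlying space of every V_t: basis v = (1,0) (degree σ), w = (0,1) (degree σ+1) -/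
abbrev V : Type := ℚ × ℚ
abbrev VV : Type := V ⊗[ℚ] V
abbrev VVV : Type := V ⊗[ℚ] VV

def vv : V := (1, 0)
def ww : V := (0, 1)

/-- (−1)^σ -/
def sgn (s : ZMod 2) : ℚ := if s = 0 then 1 else -1

/-- H: v ↦ (μ+1)v, w ↦ (μ−1)w -/
def opH (t : Triple) : V →ₗ[ℚ] V :=
  LinearMap.prodMap ((t.mu + 1) • LinearMap.id) ((t.mu - 1) • LinearMap.id)
/-- D: multiplication by λ -/
def opD (t : Triple) : V →ₗ[ℚ] V := t.lam • LinearMap.id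
/-- E: v ↦ 0, w ↦ λv -/
def opE (t : Triple) : V →ₗ[ℚ] V := (LinearMap.inl ℚ ℚ ℚ) ∘ₗ (t.lam • LinearMap.snd ℚ ℚ ℚ)
/-- F: v ↦ w, w ↦ 0 -/
def opF (t : Triple) : V →ₗ[ℚ] V := (LinearMap.inr ℚ ℚ ℚ) ∘ₗ (LinearMap.fst ℚ ℚ ℚ)
/-- the parity operator x ↦ (−1)^{deg x} x on V_t -/
def opJ (t : Triple) : V →ₗ[ℚ] V :=
  LinearMap.prodMap (sgn t.sg • LinearMap.id) ((- sgn t.sg) • LinearMap.id)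

/-- the four generators H, D, E, F of gl(1|1) -/
inductive Gen | H | D | E | F

/-- H and D have degree 0; E and F have degree 1 -/
def Gen.isEven : Gen → Bool
  | .H => true | .D => true | .E => false | .F => false

def op : Gen → Triple → V →ₗ[ℚ] V
  | .H, t => opH t
  | .D, t => opD t
  | .E, t => opE t
  | .F, t => opF t

/-- the super-Leibniz action X·(x⊗y) = (X·x)⊗y + (−1)^{deg X·deg x}·x⊗(X·y)
on V_{t₁}⊗V_{t₂} (the sign being implemented by the parity operator) -/
def op2 (g : Gen) (t₁ t₂ : Triple) : VV →ₗ[ℚ] VV :=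
  TensorProduct.map (op g t₁) LinearMap.id +
  TensorProduct.map (if g.isEven then LinearMap.id else opJ t₁) (op g t₂)

/-- the linear map ℚ×ℚ → M sending (1,0) ↦ p and (0,1) ↦ q -/
def bmap {M : Type*} [AddCommGroup M] [Module ℚ M] (p q : M) : V →ₗ[ℚ] M :=
  LinearMap.coprod (LinearMap.toSpanSingleton ℚ M p) (LinearMap.toSpanSingleton ℚ M q)

/-- Y_{t₁,t₂} : V_{t₁+t₂+e₂} → V_{t₁}⊗V_{t₂} -/
def Ymap (t₁ t₂ : Triple) : V →ₗ[ℚ] VV :=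
  bmap (vv ⊗ₜ[ℚ] vv) (ww ⊗ₜ[ℚ] vv + sgn t₁.sg • (vv ⊗ₜ[ℚ] ww))

/-- Y'_{t₁,t₂} : V_{t₁+t₂−e₂+e₃} → V_{t₁}⊗V_{t₂} -/
def Y'map (t₁ t₂ : Triple) : V →ₗ[ℚ] VV :=
  bmap ((t₁.lam + t₂.lam)⁻¹ •
      (t₁.lam • (vv ⊗ₜ[ℚ] ww) - (sgn t₁.sg * t₂.lam) • (ww ⊗ₜ[ℚ] vv)))
    (ww ⊗ₜ[ℚ] ww)

/-- L_{t₁,t₂} : V_{t₁}⊗V_{t₂} → V_{t₁+t₂+e₂} -/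
def Lmap (t₁ t₂ : Triple) : VV →ₗ[ℚ] V :=
  TensorProduct.lift (LinearMap.mk₂ ℚ
    (fun x y => ((x.1 * y.1 : ℚ),
      (t₁.lam / (t₁.lam + t₂.lam)) * (x.2 * y.1)
        + (sgn t₁.sg * t₂.lam / (t₁.lam + t₂.lam)) * (x.1 * y.2)))
    (by intro x x' y; apply Prod.ext <;> simp <;> ring)
    (by intro a x y; apply Prod.ext <;> simp [smul_eq_mul] <;> ring)
    (by intro x y y'; apply Prod.ext <;> simp <;> ring)
    (by intro a x y; apply Prod.ext <;> simp [smul_eq_mul] <;> ring))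

/-- L'_{t₁,t₂} : V_{t₁}⊗V_{t₂} → V_{t₁+t₂−e₂+e₃} -/
def L'map (t₁ t₂ : Triple) : VV →ₗ[ℚ] V :=
  TensorProduct.lift (LinearMap.mk₂ ℚ
    (fun x y => ((x.1 * y.2 - sgn t₁.sg * (x.2 * y.1) : ℚ), (x.2 * y.2 : ℚ)))
    (by intro x x' y; apply Prod.ext <;> simp <;> ring)
    (by intro a x y; apply Prod.ext <;> simp [smul_eq_mul] <;> ring)
    (by intro x y y'; apply Prod.ext <;> simp <;> ring)
    (by intro a x y; apply Prod.ext <;> simp [smul_eq_mul] <;> ring))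

/-- ∩_t : V_{t*}⊗V_t → ℚ -/
def capMap (t : Triple) : VV →ₗ[ℚ] ℚ :=
  TensorProduct.lift (LinearMap.mk₂ ℚ
    (fun x y => (x.1 * y.2 + sgn t.sg * (x.2 * y.1) : ℚ))
    (by intro x x' y; simp; ring)
    (by intro a x y; simp [smul_eq_mul]; ring)
    (by intro x y y'; simp; ring)
    (by intro a x y; simp [smul_eq_mul]; ring))

/-- ∪_t : ℚ → V_{t*}⊗V_t -/
def cupMap (t : Triple) : ℚ →ₗ[ℚ] VV :=
  LinearMap.toSpanSingleton ℚ VV (ww ⊗ₜ[ℚ] vv - sgn t.sg • (vv ⊗ₜ[ℚ] ww))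


/-- the homogeneous component of V_{t₁}⊗V_{t₂} of degree σ₁+σ₂ -/
def comp₀ : Submodule ℚ VV := Submodule.span ℚ {vv ⊗ₜ[ℚ] vv, ww ⊗ₜ[ℚ] ww}
/-- the homogeneous component of V_{t₁}⊗V_{t₂} of degree σ₁+σ₂+1 -/
def comp₁ : Submodule ℚ VV := Submodule.span ℚ {ww ⊗ₜ[ℚ] vv, vv ⊗ₜ[ℚ] ww}

/-!
When `λ₁ + λ₂ ≠ 0`, the maps `Y, Y', L, L'` exhibit `V_{t₁} ⊗ V_{t₂}` as the direct sum of
`V_s` and `V_{s'}`, where `s = t₁ + t₂ + e₂` and `s' = t₁ + t₂ - e₂ + e₃`. By Schur's lemma an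
endomorphism commuting with the action is then a scalar on each summand: `V_s` is generated by its
vector of highest weight, `V_{s'}` by its vector of lowest weight, and neither of these two
`H`-weights occurs in the other summand, so there are no nonzero maps between the summands.
-/

section Intertwiners

variable {K ι M N N' P : Type*} [CommRing K] [AddCommGroup M] [Module K M]
  [AddCommGroup N] [Module K N] [AddCommGroup N'] [Module K N'] [AddCommGroup P] [Module K P]

/-- `f` is equivariant for the families of operators `ρ` on `M` and `τ` on `N`. The `gl(1|1)`-linear
maps are the case of the index type `Gen` with the families `op · t` and `op2 · t₁ t₂`. -/
def IsIntertwiner (ρ : ι → Module.End K M) (τ : ι → Module.End K N) (f : M →ₗ[K] N) : Prop :=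
  ∀ g, f ∘ₗ ρ g = τ g ∘ₗ f

theorem IsIntertwiner.apply {ρ : ι → Module.End K M} {τ : ι → Module.End K N} {f : M →ₗ[K] N}
    (hf : IsIntertwiner ρ τ f) (g : ι) (x : M) : f (ρ g x) = τ g (f x) :=
  LinearMap.congr_fun (hf g) x

theorem IsIntertwiner.comp {ρ : ι → Module.End K M} {τ : ι → Module.End K N}
    {υ : ι → Module.End K P} {f : N →ₗ[K] P} {e : M →ₗ[K] N}
    (hf : IsIntertwiner τ υ f) (he : IsIntertwiner ρ τ e) : IsIntertwiner ρ υ (f ∘ₗ e) := by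
  intro g
  rw [LinearMap.comp_assoc, he g, ← LinearMap.comp_assoc, hf g, LinearMap.comp_assoc]

/-- The inclusions `i, i'` and projections `p, p'` exhibit `M` as the direct sum of `N` and `N'`,
expressed by the equations of a biproduct. -/
structure IsBiproduct (i : N →ₗ[K] M) (p : M →ₗ[K] N) (i' : N' →ₗ[K] M) (p' : M →ₗ[K] N') :
    Prop where
  fst_comp_inl : p ∘ₗ i = LinearMap.id
  snd_comp_inr : p' ∘ₗ i' = LinearMap.id
  fst_comp_inr : p ∘ₗ i' = 0
  snd_comp_inl : p' ∘ₗ i = 0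
  total : i ∘ₗ p + i' ∘ₗ p' = LinearMap.id

namespace IsBiproduct

variable {i : N →ₗ[K] M} {p : M →ₗ[K] N} {i' : N' →ₗ[K] M} {p' : M →ₗ[K] N'}

theorem symm (h : IsBiproduct i p i' p') : IsBiproduct i' p' i p :=
  ⟨h.snd_comp_inr, h.fst_comp_inl, h.snd_comp_inl, h.fst_comp_inr,
    (add_comm _ _).trans h.total⟩

theorem total_apply (h : IsBiproduct i p i' p') (x : M) : i (p x) + i' (p' x) = x :=
  LinearMap.congr_fun h.total x

theorem isIntertwiner_fst (h : IsBiproduct i p i' p') {ρ : ι → Module.End K M}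
    {σ : ι → Module.End K N} {σ' : ι → Module.End K N'}
    (hi : IsIntertwiner σ ρ i) (hi' : IsIntertwiner σ' ρ i') : IsIntertwiner ρ σ p := by
  intro g
  ext x
  calc p (ρ g x) = p (ρ g (i (p x) + i' (p' x))) := by rw [h.total_apply]
    _ = (p ∘ₗ i) (σ g (p x)) + (p ∘ₗ i') (σ' g (p' x)) := by
      simp only [map_add, LinearMap.comp_apply, hi.apply, hi'.apply]
    _ = σ g (p x) := by simp [h.fst_comp_inl, h.fst_comp_inr]

theorem inr_snd_mem (h : IsBiproduct i p i' p') {S : Submodule K M}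
    (hS : ∀ x ∈ S, i (p x) ∈ S) : ∀ x ∈ S, i' (p' x) ∈ S := by
  intro x hx
  rw [← sub_eq_of_eq_add' (h.total_apply x).symm]
  exact S.sub_mem hx (hS x hx)

theorem eq_smul_add_smul (h : IsBiproduct i p i' p') {f : Module.End K M} {c d : K}
    (hc : p ∘ₗ f ∘ₗ i = c • LinearMap.id) (hd : p' ∘ₗ f ∘ₗ i' = d • LinearMap.id)
    (hinr : p ∘ₗ f ∘ₗ i' = 0) (hinl : p' ∘ₗ f ∘ₗ i = 0) :
    f = c • (i ∘ₗ p) + d • (i' ∘ₗ p') := by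
  have apply_inl (n : N) : f (i n) = c • i n := by
    have hfst : p (f (i n)) = c • n := LinearMap.congr_fun hc n
    have hsnd : p' (f (i n)) = 0 := LinearMap.congr_fun hinl n
    rw [← h.total_apply (f (i n)), hfst, hsnd, map_smul, map_zero, add_zero]
  have apply_inr (n : N') : f (i' n) = d • i' n := by
    have hfst : p (f (i' n)) = 0 := LinearMap.congr_fun hinr n
    have hsnd : p' (f (i' n)) = d • n := LinearMap.congr_fun hd n
    rw [← h.total_apply (f (i' n)), hfst, hsnd, map_smul, map_zero, zero_add]
  ext x
  calc f x = f (i (p x) + i' (p' x)) := by rw [h.total_apply]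
    _ = c • i (p x) + d • i' (p' x) := by rw [map_add, apply_inl, apply_inr]

theorem left_eq_zero_of_smul_add_smul_eq_zero (h : IsBiproduct i p i' p') [IsDomain K]
    [Module.IsTorsionFree K N] [Nontrivial N] {c d : K}
    (hcd : c • (i ∘ₗ p) + d • (i' ∘ₗ p') = 0) : c = 0 := by
  obtain ⟨n, hn⟩ := exists_ne (0 : N)
  have fst_inl : p (i n) = n := LinearMap.congr_fun h.fst_comp_inl n
  have snd_inl : p' (i n) = 0 := LinearMap.congr_fun h.snd_comp_inl n
  have hcn : c • n = 0 := by
    simpa [fst_inl, snd_inl] using congrArg p (LinearMap.congr_fun hcd (i n))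
  exact (smul_eq_zero.mp hcn).resolve_right hn

end IsBiproduct

end Intertwiners

theorem sgn_eq_one_or_neg_one (s : ZMod 2) : sgn s = 1 ∨ sgn s = -1 := by
  unfold sgn
  split_ifs <;> simp

theorem Triple.lam_add (t t' : Triple) : (t + t').lam = t.lam + t'.lam := rfl

theorem Triple.mu_add (t t' : Triple) : (t + t').mu = t.mu + t'.mu := rfl

theorem Triple.lam_sub (t t' : Triple) : (t - t').lam = t.lam - t'.lam :=
  (sub_eq_add_neg _ _).symm

theorem Triple.mu_sub (t t' : Triple) : (t - t').mu = t.mu - t'.mu :=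
  (sub_eq_add_neg _ _).symm

theorem eq_smul_vv_add_smul_ww (x : V) : x = x.1 • vv + x.2 • ww := by
  ext <;> simp [vv, ww]

section Ext

variable {M : Type*} [AddCommGroup M] [Module ℚ M]

theorem linearMap_ext_vv_ww {f g : V →ₗ[ℚ] M} (hv : f vv = g vv) (hw : f ww = g ww) : f = g := by
  ext
  · exact hv
  · exact hw

theorem linearMap_ext_tmul {f g : VV →ₗ[ℚ] M}
    (hvv : f (vv ⊗ₜ vv) = g (vv ⊗ₜ vv)) (hvw : f (vv ⊗ₜ ww) = g (vv ⊗ₜ ww))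
    (hwv : f (ww ⊗ₜ vv) = g (ww ⊗ₜ vv)) (hww : f (ww ⊗ₜ ww) = g (ww ⊗ₜ ww)) : f = g :=
  TensorProduct.ext (linearMap_ext_vv_ww (linearMap_ext_vv_ww hvv hvw)
    (linearMap_ext_vv_ww hwv hww))

theorem bmap_vv (p q : M) : bmap p q vv = p := by simp [bmap, vv]

theorem bmap_ww (p q : M) : bmap p q ww = q := by simp [bmap, ww]

end Ext

section Action

variable (t : Triple)

theorem op_H_apply (x : V) : op .H t x = ((t.mu + 1) * x.1, (t.mu - 1) * x.2) := rfl

theorem op_H_vv : op .H t vv = (t.mu + 1) • vv := by ext <;> simp [op_H_apply, vv]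

theorem op_H_ww : op .H t ww = (t.mu - 1) • ww := by ext <;> simp [op_H_apply, ww]

theorem op_D_apply (x : V) : op .D t x = t.lam • x := rfl

theorem op_E_vv : op .E t vv = 0 := by ext <;> simp [op, opE, vv]

theorem op_E_ww : op .E t ww = t.lam • vv := by ext <;> simp [op, opE, vv, ww]

theorem op_F_vv : op .F t vv = ww := by ext <;> simp [op, opF, vv, ww]

theorem op_F_ww : op .F t ww = 0 := by ext <;> simp [op, opF, ww]

theorem opJ_vv : opJ t vv = sgn t.sg • vv := by ext <;> simp [opJ, vv]

theorem opJ_ww : opJ t ww = (-sgn t.sg) • ww := by ext <;> simp [opJ, ww]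

variable (t₁ t₂ : Triple) (x y : V)

theorem op2_H_tmul : op2 .H t₁ t₂ (x ⊗ₜ y) = op .H t₁ x ⊗ₜ y + x ⊗ₜ op .H t₂ y := rfl

theorem op2_D_tmul : op2 .D t₁ t₂ (x ⊗ₜ y) = op .D t₁ x ⊗ₜ y + x ⊗ₜ op .D t₂ y := rfl

theorem op2_E_tmul : op2 .E t₁ t₂ (x ⊗ₜ y) = op .E t₁ x ⊗ₜ y + opJ t₁ x ⊗ₜ op .E t₂ y := rfl

theorem op2_F_tmul : op2 .F t₁ t₂ (x ⊗ₜ y) = op .F t₁ x ⊗ₜ y + opJ t₁ x ⊗ₜ op .F t₂ y := rfl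

end Action

section Schur

variable {t t' : Triple} {φ : V →ₗ[ℚ] V}

theorem eq_zero_of_op_H_eq_smul {x : V} {a : ℚ} (hx : op .H t x = a • x)
    (hv : a ≠ t.mu + 1) (hw : a ≠ t.mu - 1) : x = 0 := by
  obtain ⟨hx₁, hx₂⟩ := Prod.ext_iff.mp hx
  ext
  · exact (mul_eq_mul_right_iff.mp hx₁).resolve_left hv.symm
  · exact (mul_eq_mul_right_iff.mp hx₂).resolve_left hw.symm

theorem eq_smul_vv_of_op_H_eq_smul {x : V} (hx : op .H t x = (t.mu + 1) • x) : x = x.1 • vv := by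
  have hx₂ : (t.mu - 1) * x.2 = (t.mu + 1) * x.2 := congrArg Prod.snd hx
  have hsnd : x.2 = 0 := by linarith
  simpa [hsnd] using eq_smul_vv_add_smul_ww x

theorem IsIntertwiner.op_H_apply_vv (hφ : IsIntertwiner (op · t) (op · t') φ) :
    op .H t' (φ vv) = (t.mu + 1) • φ vv := by
  rw [← hφ.apply .H vv, op_H_vv, map_smul]

theorem IsIntertwiner.op_H_apply_ww (hφ : IsIntertwiner (op · t) (op · t') φ) :
    op .H t' (φ ww) = (t.mu - 1) • φ ww := by
  rw [← hφ.apply .H ww, op_H_ww, map_smul]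

theorem IsIntertwiner.apply_ww (hφ : IsIntertwiner (op · t) (op · t') φ) :
    φ ww = op .F t' (φ vv) := by
  rw [← hφ.apply .F vv, op_F_vv]

theorem IsIntertwiner.exists_eq_smul_id (hφ : IsIntertwiner (op · t) (op · t) φ) :
    ∃ c : ℚ, φ = c • LinearMap.id := by
  have hv : φ vv = (φ vv).1 • vv := eq_smul_vv_of_op_H_eq_smul hφ.op_H_apply_vv
  refine ⟨(φ vv).1, linearMap_ext_vv_ww hv ?_⟩
  calc φ ww = op .F t ((φ vv).1 • vv) := by rw [hφ.apply_ww, ← hv]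
    _ = (φ vv).1 • ww := by rw [map_smul, op_F_vv]

theorem IsIntertwiner.eq_zero_of_highest_weight (hφ : IsIntertwiner (op · t) (op · t') φ)
    (hv : t.mu + 1 ≠ t'.mu + 1) (hw : t.mu + 1 ≠ t'.mu - 1) : φ = 0 := by
  have hφv : φ vv = 0 := eq_zero_of_op_H_eq_smul hφ.op_H_apply_vv hv hw
  exact linearMap_ext_vv_ww hφv (by rw [hφ.apply_ww, hφv, map_zero, LinearMap.zero_apply])

theorem IsIntertwiner.eq_zero_of_lowest_weight (hφ : IsIntertwiner (op · t) (op · t') φ)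
    (ht : t.lam ≠ 0) (hv : t.mu - 1 ≠ t'.mu + 1) (hw : t.mu - 1 ≠ t'.mu - 1) : φ = 0 := by
  have hφw : φ ww = 0 := eq_zero_of_op_H_eq_smul hφ.op_H_apply_ww hv hw
  have hφv : t.lam • φ vv = 0 := by
    rw [← map_smul, ← op_E_ww, hφ.apply .E ww, hφw, map_zero]
  exact linearMap_ext_vv_ww ((smul_eq_zero.mp hφv).resolve_left ht) hφw

end Schur

section TensorDecomposition

variable (t₁ t₂ : Triple)

theorem Ymap_vv : Ymap t₁ t₂ vv = vv ⊗ₜ vv := bmap_vv _ _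

theorem Ymap_ww : Ymap t₁ t₂ ww = ww ⊗ₜ vv + sgn t₁.sg • (vv ⊗ₜ ww) := bmap_ww _ _

theorem Y'map_vv : Y'map t₁ t₂ vv = (t₁.lam + t₂.lam)⁻¹ •
    (t₁.lam • (vv ⊗ₜ ww) - (sgn t₁.sg * t₂.lam) • (ww ⊗ₜ vv)) := bmap_vv _ _

theorem Y'map_ww : Y'map t₁ t₂ ww = ww ⊗ₜ ww := bmap_ww _ _

theorem Lmap_vv_vv : Lmap t₁ t₂ (vv ⊗ₜ vv) = vv := by simp [Lmap, vv]

theorem Lmap_ww_vv : Lmap t₁ t₂ (ww ⊗ₜ vv) = (t₁.lam / (t₁.lam + t₂.lam)) • ww := by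
  simp [Lmap, vv, ww]

theorem Lmap_vv_ww : Lmap t₁ t₂ (vv ⊗ₜ ww) = (sgn t₁.sg * t₂.lam / (t₁.lam + t₂.lam)) • ww := by
  simp [Lmap, vv, ww]

theorem Lmap_ww_ww : Lmap t₁ t₂ (ww ⊗ₜ ww) = 0 := by simp [Lmap, ww]

theorem L'map_vv_vv : L'map t₁ t₂ (vv ⊗ₜ vv) = 0 := by simp [L'map, vv]

theorem L'map_ww_vv : L'map t₁ t₂ (ww ⊗ₜ vv) = (-sgn t₁.sg) • vv := by simp [L'map, vv, ww]

theorem L'map_vv_ww : L'map t₁ t₂ (vv ⊗ₜ ww) = vv := by simp [L'map, vv, ww]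

theorem L'map_ww_ww : L'map t₁ t₂ (ww ⊗ₜ ww) = ww := by simp [L'map, ww]

theorem isIntertwiner_Ymap :
    IsIntertwiner (op · (t₁ + t₂ + e₂)) (op2 · t₁ t₂) (Ymap t₁ t₂) := by
  intro g
  rcases sgn_eq_one_or_neg_one t₁.sg with hs | hs <;> cases g <;> apply linearMap_ext_vv_ww <;>
  simp only [LinearMap.comp_apply, Triple.lam_add, Triple.mu_add, e₂, hs, Ymap_vv, Ymap_ww,
    op_H_vv, op_H_ww, op_D_apply, op_E_vv, op_E_ww, op_F_vv, op_F_ww, opJ_vv, opJ_ww,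
    op2_H_tmul, op2_D_tmul, op2_E_tmul, op2_F_tmul, map_add, map_smul, map_zero,
    zero_tmul, tmul_zero, tmul_smul, ← smul_tmul'] <;>
  module

theorem Lmap_comp_Y'map : Lmap t₁ t₂ ∘ₗ Y'map t₁ t₂ = 0 := by
  apply linearMap_ext_vv_ww
  · simp only [LinearMap.comp_apply, LinearMap.zero_apply, Y'map_vv, map_sub, map_smul,
      Lmap_ww_vv, Lmap_vv_ww]
    module
  · simp only [LinearMap.comp_apply, LinearMap.zero_apply, Y'map_ww, Lmap_ww_ww]

theorem L'map_comp_Ymap : L'map t₁ t₂ ∘ₗ Ymap t₁ t₂ = 0 := by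
  apply linearMap_ext_vv_ww
  · simp only [LinearMap.comp_apply, LinearMap.zero_apply, Ymap_vv, L'map_vv_vv]
  · simp only [LinearMap.comp_apply, LinearMap.zero_apply, Ymap_ww, map_add, map_smul,
      L'map_ww_vv, L'map_vv_ww]
    module

theorem Ymap_Lmap_mem_comp₀ : ∀ x ∈ comp₀, Ymap t₁ t₂ (Lmap t₁ t₂ x) ∈ comp₀ := by
  have hv : Ymap t₁ t₂ vv ∈ comp₀ := by
    rw [Ymap_vv]
    exact Submodule.subset_span (Set.mem_insert _ _)
  suffices h : comp₀ ≤ comp₀.comap (Ymap t₁ t₂ ∘ₗ Lmap t₁ t₂) from h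
  refine Submodule.span_le.mpr (Set.pair_subset ?_ ?_)
  · simpa [Lmap_vv_vv] using hv
  · simp [Lmap_ww_ww]

theorem Ymap_Lmap_mem_comp₁ : ∀ x ∈ comp₁, Ymap t₁ t₂ (Lmap t₁ t₂ x) ∈ comp₁ := by
  have hw : Ymap t₁ t₂ ww ∈ comp₁ :=
    Submodule.mem_span_pair.mpr ⟨1, sgn t₁.sg, by rw [Ymap_ww, one_smul]⟩
  suffices h : comp₁ ≤ comp₁.comap (Ymap t₁ t₂ ∘ₗ Lmap t₁ t₂) from h
  refine Submodule.span_le.mpr (Set.pair_subset ?_ ?_)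
  · simpa [Lmap_ww_vv] using comp₁.smul_mem _ hw
  · simpa [Lmap_vv_ww] using comp₁.smul_mem _ hw

variable {t₁ t₂}

theorem isIntertwiner_Y'map (h₁₂ : t₁.lam + t₂.lam ≠ 0) :
    IsIntertwiner (op · (t₁ + t₂ - e₂ + e₃)) (op2 · t₁ t₂) (Y'map t₁ t₂) := by
  intro g
  rcases sgn_eq_one_or_neg_one t₁.sg with hs | hs <;> cases g <;> apply linearMap_ext_vv_ww <;>
  simp only [LinearMap.comp_apply, Triple.lam_add, Triple.mu_add, Triple.lam_sub, Triple.mu_sub,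
    e₂, e₃, hs, Y'map_vv, Y'map_ww,
    op_H_vv, op_H_ww, op_D_apply, op_E_vv, op_E_ww, op_F_vv, op_F_ww, opJ_vv, opJ_ww,
    op2_H_tmul, op2_D_tmul, op2_E_tmul, op2_F_tmul, map_sub, map_smul, map_zero,
    zero_tmul, tmul_zero, tmul_smul, ← smul_tmul'] <;>
  match_scalars <;> field_simp <;> ring

theorem Lmap_comp_Ymap (h₁₂ : t₁.lam + t₂.lam ≠ 0) :
    Lmap t₁ t₂ ∘ₗ Ymap t₁ t₂ = LinearMap.id := by
  apply linearMap_ext_vv_ww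
  · simp only [LinearMap.comp_apply, LinearMap.id_apply, Ymap_vv, Lmap_vv_vv]
  · rcases sgn_eq_one_or_neg_one t₁.sg with hs | hs <;>
    simp only [LinearMap.comp_apply, LinearMap.id_apply, Ymap_ww, map_add, map_smul,
      Lmap_ww_vv, Lmap_vv_ww, hs] <;>
    match_scalars <;> field_simp

theorem L'map_comp_Y'map (h₁₂ : t₁.lam + t₂.lam ≠ 0) :
    L'map t₁ t₂ ∘ₗ Y'map t₁ t₂ = LinearMap.id := by
  apply linearMap_ext_vv_ww
  · rcases sgn_eq_one_or_neg_one t₁.sg with hs | hs <;>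
    simp only [LinearMap.comp_apply, LinearMap.id_apply, Y'map_vv, map_sub, map_smul,
      L'map_ww_vv, L'map_vv_ww, hs] <;>
    match_scalars <;> field_simp <;> ring
  · simp only [LinearMap.comp_apply, LinearMap.id_apply, Y'map_ww, L'map_ww_ww]

theorem Ymap_comp_Lmap_add_Y'map_comp_L'map (h₁₂ : t₁.lam + t₂.lam ≠ 0) :
    Ymap t₁ t₂ ∘ₗ Lmap t₁ t₂ + Y'map t₁ t₂ ∘ₗ L'map t₁ t₂ = LinearMap.id := by
  rcases sgn_eq_one_or_neg_one t₁.sg with hs | hs <;> apply linearMap_ext_tmul <;>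
  simp only [LinearMap.add_apply, LinearMap.comp_apply, LinearMap.id_apply, hs, map_smul, map_zero,
    Lmap_vv_vv, Lmap_vv_ww, Lmap_ww_vv, Lmap_ww_ww, L'map_vv_vv, L'map_vv_ww, L'map_ww_vv,
    L'map_ww_ww, Ymap_vv, Ymap_ww, Y'map_vv, Y'map_ww] <;>
  match_scalars <;> field_simp <;> ring

theorem isBiproduct_Ymap_Y'map (h₁₂ : t₁.lam + t₂.lam ≠ 0) :
    IsBiproduct (Ymap t₁ t₂) (Lmap t₁ t₂) (Y'map t₁ t₂) (L'map t₁ t₂) where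
  fst_comp_inl := Lmap_comp_Ymap h₁₂
  snd_comp_inr := L'map_comp_Y'map h₁₂
  fst_comp_inr := Lmap_comp_Y'map t₁ t₂
  snd_comp_inl := L'map_comp_Ymap t₁ t₂
  total := Ymap_comp_Lmap_add_Y'map_comp_L'map h₁₂

theorem isIntertwiner_Lmap (h₁₂ : t₁.lam + t₂.lam ≠ 0) :
    IsIntertwiner (op2 · t₁ t₂) (op · (t₁ + t₂ + e₂)) (Lmap t₁ t₂) :=
  (isBiproduct_Ymap_Y'map h₁₂).isIntertwiner_fst (isIntertwiner_Ymap t₁ t₂)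
    (isIntertwiner_Y'map h₁₂)

theorem isIntertwiner_L'map (h₁₂ : t₁.lam + t₂.lam ≠ 0) :
    IsIntertwiner (op2 · t₁ t₂) (op · (t₁ + t₂ - e₂ + e₃)) (L'map t₁ t₂) :=
  (isBiproduct_Ymap_Y'map h₁₂).symm.isIntertwiner_fst (isIntertwiner_Y'map h₁₂)
    (isIntertwiner_Ymap t₁ t₂)

theorem IsIntertwiner.exists_eq_smul_add_smul (h₁₂ : t₁.lam + t₂.lam ≠ 0) {f : VV →ₗ[ℚ] VV}
    (hf : IsIntertwiner (op2 · t₁ t₂) (op2 · t₁ t₂) f) :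
    ∃ c d : ℚ, f = c • (Ymap t₁ t₂ ∘ₗ Lmap t₁ t₂) + d • (Y'map t₁ t₂ ∘ₗ L'map t₁ t₂) := by
  have hfY := hf.comp (isIntertwiner_Ymap t₁ t₂)
  have hfY' := hf.comp (isIntertwiner_Y'map h₁₂)
  have hL := isIntertwiner_Lmap h₁₂
  have hL' := isIntertwiner_L'map h₁₂
  have hmu : (t₁ + t₂ + e₂).mu = t₁.mu + t₂.mu + 1 := rfl
  have hmu' : (t₁ + t₂ - e₂ + e₃).mu = t₁.mu + t₂.mu - 1 := by
    simp [Triple.mu_add, Triple.mu_sub, e₂, e₃]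
  have hlam' : (t₁ + t₂ - e₂ + e₃).lam = t₁.lam + t₂.lam := by
    simp [Triple.lam_add, Triple.lam_sub, e₂, e₃]
  obtain ⟨c, hc⟩ := (hL.comp hfY).exists_eq_smul_id
  obtain ⟨d, hd⟩ := (hL'.comp hfY').exists_eq_smul_id
  have hinl : L'map t₁ t₂ ∘ₗ f ∘ₗ Ymap t₁ t₂ = 0 :=
    (hL'.comp hfY).eq_zero_of_highest_weight (by linarith) (by linarith)
  have hinr : Lmap t₁ t₂ ∘ₗ f ∘ₗ Y'map t₁ t₂ = 0 :=
    (hL.comp hfY').eq_zero_of_lowest_weight (hlam' ▸ h₁₂) (by linarith) (by linarith)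
  exact ⟨c, d, (isBiproduct_Ymap_Y'map h₁₂).eq_smul_add_smul hc hd hinr hinl⟩

end TensorDecomposition

theorem stmt9_general (t₁ t₂ : Triple) (h₁₂ : t₁.lam + t₂.lam ≠ 0) :
    (∀ f ∈ ({Ymap t₁ t₂ ∘ₗ Lmap t₁ t₂, Y'map t₁ t₂ ∘ₗ L'map t₁ t₂} :
        Set (VV →ₗ[ℚ] VV)),
      (∀ x ∈ comp₀, f x ∈ comp₀) ∧ (∀ x ∈ comp₁, f x ∈ comp₁) ∧
      (∀ g : Gen, f ∘ₗ op2 g t₁ t₂ = op2 g t₁ t₂ ∘ₗ f)) ∧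
    (∀ c d : ℚ, c • (Ymap t₁ t₂ ∘ₗ Lmap t₁ t₂) + d • (Y'map t₁ t₂ ∘ₗ L'map t₁ t₂) = 0 →
      c = 0 ∧ d = 0) ∧
    (∀ f : VV →ₗ[ℚ] VV, (∀ g : Gen, f ∘ₗ op2 g t₁ t₂ = op2 g t₁ t₂ ∘ₗ f) →
      ∃ c d : ℚ, f = c • (Ymap t₁ t₂ ∘ₗ Lmap t₁ t₂) + d • (Y'map t₁ t₂ ∘ₗ L'map t₁ t₂)) := by
  have hYY' := isBiproduct_Ymap_Y'map h₁₂
  refine ⟨?_, fun c d hcd ↦ ?_, fun f hf ↦ IsIntertwiner.exists_eq_smul_add_smul h₁₂ hf⟩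
  · rintro f (rfl | rfl)
    · exact ⟨Ymap_Lmap_mem_comp₀ t₁ t₂, Ymap_Lmap_mem_comp₁ t₁ t₂,
        (isIntertwiner_Ymap t₁ t₂).comp (isIntertwiner_Lmap h₁₂)⟩
    · exact ⟨hYY'.inr_snd_mem (Ymap_Lmap_mem_comp₀ t₁ t₂),
        hYY'.inr_snd_mem (Ymap_Lmap_mem_comp₁ t₁ t₂),
        (isIntertwiner_Y'map h₁₂).comp (isIntertwiner_L'map h₁₂)⟩
  · exact ⟨hYY'.left_eq_zero_of_smul_add_smul_eq_zero hcd,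
      hYY'.symm.left_eq_zero_of_smul_add_smul_eq_zero ((add_comm _ _).trans hcd)⟩

/-- the grading-preserving gl(1|1)-linear endomorphisms of
V_{t₁}⊗V_{t₂} form a 2-dimensional space with basis {Y∘L, Y'∘L'}. -/
theorem stmt9 (t₁ t₂ : Triple) (h₁ : t₁.lam ≠ 0) (h₂ : t₂.lam ≠ 0)
    (h₁₂ : t₁.lam + t₂.lam ≠ 0) :
    -- the two basis elements preserve the grading and commute with the action
    (∀ f ∈ ({Ymap t₁ t₂ ∘ₗ Lmap t₁ t₂, Y'map t₁ t₂ ∘ₗ L'map t₁ t₂} :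
        Set (VV →ₗ[ℚ] VV)),
      (∀ x ∈ comp₀, f x ∈ comp₀) ∧ (∀ x ∈ comp₁, f x ∈ comp₁) ∧
      (∀ g : Gen, f ∘ₗ op2 g t₁ t₂ = op2 g t₁ t₂ ∘ₗ f)) ∧
    -- they are linearly independent
    (∀ c d : ℚ, c • (Ymap t₁ t₂ ∘ₗ Lmap t₁ t₂) + d • (Y'map t₁ t₂ ∘ₗ L'map t₁ t₂) = 0 →
      c = 0 ∧ d = 0) ∧
    -- and they span
    (∀ f : VV →ₗ[ℚ] VV,
      (∀ x ∈ comp₀, f x ∈ comp₀) → (∀ x ∈ comp₁, f x ∈ comp₁) →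
      (∀ g : Gen, f ∘ₗ op2 g t₁ t₂ = op2 g t₁ t₂ ∘ₗ f) →
      ∃ c d : ℚ, f = c • (Ymap t₁ t₂ ∘ₗ Lmap t₁ t₂) + d • (Y'map t₁ t₂ ∘ₗ L'map t₁ t₂)) := by
  obtain ⟨hbasis, hindep, hspan⟩ := stmt9_general t₁ t₂ h₁₂
  exact ⟨hbasis, hindep, fun f _ _ hf ↦ hspan f hf⟩

end
end

section
/- As linear maps V_{t₁}⊗V_{t₂}⊗V_{t₃} → V_{t₈}: L_{t₁,t₉}∘(I_{t₁}⊗L'_{t₂,t₃}) = −((−1)^{σ₂}·λ₁/(λ₁+λ₂))·L_{t₇,t₃}∘(L'_{t₁,t₂}⊗I_{t₃}) + L'_{t₄,t₃}∘(L_{t₁,t₂}⊗I_{t₃}), and L'_{t₁,t₆}∘(I_{t₁}⊗L_{t₂,t₃}) = κ·L_{t₇,t₃}∘(L'_{t₁,t₂}⊗I_{t₃}) + ((−1)^{σ₂}·λ₃/(λ₂+λ₃))·L'_{t₄,t₃}∘(L_{t₁,t₂}⊗I_{t₃}). -/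
open TensorProduct

noncomputable section

/-- t₄ = t₁+t₂+e₂ -/
def T4 (t₁ t₂ : Triple) : Triple := t₁ + t₂ + e₂
/-- t₅ = t₄+t₃+e₂ -/
def T5 (t₁ t₂ t₃ : Triple) : Triple := T4 t₁ t₂ + t₃ + e₂
/-- t₆ = t₂+t₃+e₂ -/
def T6 (t₂ t₃ : Triple) : Triple := t₂ + t₃ + e₂
/-- t₇ = t₄−2e₂+e₃ -/
def T7 (t₁ t₂ : Triple) : Triple := T4 t₁ t₂ - e₂ - e₂ + e₃
/-- t₈ = t₅−2e₂+e₃ -/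
def T8 (t₁ t₂ t₃ : Triple) : Triple := T5 t₁ t₂ t₃ - e₂ - e₂ + e₃
/-- t₉ = t₆−2e₂+e₃ -/
def T9 (t₂ t₃ : Triple) : Triple := T6 t₂ t₃ - e₂ - e₂ + e₃
/-- κ = λ₂(λ₁+λ₂+λ₃)/((λ₁+λ₂)(λ₂+λ₃)) -/
def kap (t₁ t₂ t₃ : Triple) : ℚ :=
  t₂.lam * (t₁.lam + t₂.lam + t₃.lam) / ((t₁.lam + t₂.lam) * (t₂.lam + t₃.lam))

theorem sgn_mul_self (s : ZMod 2) : sgn s * sgn s = 1 :=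
  mul_self_eq_one_iff.mpr (sgn_eq_one_or_neg_one s)

theorem sgn_one : sgn 1 = -1 := by
  simp [sgn]

theorem sgn_add (s s' : ZMod 2) : sgn (s + s') = sgn s * sgn s' := by
  revert s s'
  decide +kernel

namespace Triple

theorem lam_add_s13 (a b : Triple) : (a + b).lam = a.lam + b.lam := rfl

theorem sg_add (a b : Triple) : (a + b).sg = a.sg + b.sg := rfl

theorem lam_sub_s13 (a b : Triple) : (a - b).lam = a.lam - b.lam :=
  (sub_eq_add_neg _ _).symm

theorem sg_sub (a b : Triple) : (a - b).sg = a.sg - b.sg :=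
  (sub_eq_add_neg _ _).symm

end Triple

theorem sgn_T4 (t₁ t₂ : Triple) : sgn (T4 t₁ t₂).sg = sgn t₁.sg * sgn t₂.sg := by
  simp [T4, e₂, Triple.sg_add, sgn_add]

theorem lam_T7 (t₁ t₂ : Triple) : (T7 t₁ t₂).lam = t₁.lam + t₂.lam := by
  simp [T7, T4, e₂, e₃, Triple.lam_add_s13, Triple.lam_sub_s13]

theorem sgn_T7 (t₁ t₂ : Triple) : sgn (T7 t₁ t₂).sg = -(sgn t₁.sg * sgn t₂.sg) := by
  simp [T7, T4, e₂, e₃, Triple.sg_add, Triple.sg_sub, sgn_add, sgn_one]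

theorem lam_T9 (t₂ t₃ : Triple) : (T9 t₂ t₃).lam = t₂.lam + t₃.lam :=
  lam_T7 t₂ t₃

theorem Lmap_tmul (t₁ t₂ : Triple) (x y : V) :
    Lmap t₁ t₂ (x ⊗ₜ y) =
      (x.1 * y.1,
        t₁.lam / (t₁.lam + t₂.lam) * (x.2 * y.1)
          + sgn t₁.sg * t₂.lam / (t₁.lam + t₂.lam) * (x.1 * y.2)) :=
  rfl

theorem L'map_tmul (t₁ t₂ : Triple) (x y : V) :
    L'map t₁ t₂ (x ⊗ₜ y) = (x.1 * y.2 - sgn t₁.sg * (x.2 * y.1), x.2 * y.2) :=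
  rfl

section TripleTensor

variable (t₁ t₂ t₃ : Triple) (x y z : V)

theorem Lmap_tmul_L'map_tmul :
    Lmap t₁ (T9 t₂ t₃) (x ⊗ₜ L'map t₂ t₃ (y ⊗ₜ z)) =
      (x.1 * y.1 * z.2 - sgn t₂.sg * (x.1 * y.2 * z.1),
        (t₁.lam * (x.2 * y.1 * z.2) - sgn t₂.sg * t₁.lam * (x.2 * y.2 * z.1)
          + sgn t₁.sg * (t₂.lam + t₃.lam) * (x.1 * y.2 * z.2))
            / (t₁.lam + t₂.lam + t₃.lam)) := by
  simp only [Lmap_tmul, L'map_tmul, lam_T9, ← add_assoc]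
  ext <;> ring

theorem L'map_tmul_Lmap_tmul :
    L'map t₁ (T6 t₂ t₃) (x ⊗ₜ Lmap t₂ t₃ (y ⊗ₜ z)) =
      ((t₂.lam * (x.1 * y.2 * z.1) + sgn t₂.sg * t₃.lam * (x.1 * y.1 * z.2))
            / (t₂.lam + t₃.lam) - sgn t₁.sg * (x.2 * y.1 * z.1),
        (t₂.lam * (x.2 * y.2 * z.1) + sgn t₂.sg * t₃.lam * (x.2 * y.1 * z.2))
            / (t₂.lam + t₃.lam)) := by
  simp only [Lmap_tmul, L'map_tmul]
  ext <;> ring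

theorem Lmap_L'map_tmul_tmul :
    Lmap (T7 t₁ t₂) t₃ (L'map t₁ t₂ (x ⊗ₜ y) ⊗ₜ z) =
      (x.1 * y.2 * z.1 - sgn t₁.sg * (x.2 * y.1 * z.1),
        ((t₁.lam + t₂.lam) * (x.2 * y.2 * z.1)
          + sgn t₂.sg * t₃.lam * (x.2 * y.1 * z.2 - sgn t₁.sg * (x.1 * y.2 * z.2)))
            / (t₁.lam + t₂.lam + t₃.lam)) := by
  simp only [Lmap_tmul, L'map_tmul, lam_T7, sgn_T7]
  ext
  · ring
  · linear_combination sgn t₂.sg * t₃.lam / (t₁.lam + t₂.lam + t₃.lam) * (x.2 * y.1 * z.2)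
      * sgn_mul_self t₁.sg

theorem L'map_Lmap_tmul_tmul :
    L'map (T4 t₁ t₂) t₃ (Lmap t₁ t₂ (x ⊗ₜ y) ⊗ₜ z) =
      (x.1 * y.1 * z.2
          - sgn t₂.sg * (sgn t₁.sg * t₁.lam * (x.2 * y.1 * z.1) + t₂.lam * (x.1 * y.2 * z.1))
            / (t₁.lam + t₂.lam),
        (t₁.lam * (x.2 * y.1 * z.2) + sgn t₁.sg * t₂.lam * (x.1 * y.2 * z.2))
            / (t₁.lam + t₂.lam)) := by
  simp only [Lmap_tmul, L'map_tmul, sgn_T4]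
  ext
  · linear_combination -sgn t₂.sg * t₂.lam / (t₁.lam + t₂.lam) * (x.1 * y.2 * z.1)
      * sgn_mul_self t₁.sg
  · ring

variable {t₁ t₂ t₃}

theorem Lmap_tmul_L'map_tmul_eq_add (h₁₂ : t₁.lam + t₂.lam ≠ 0)
    (h₁₂₃ : t₁.lam + t₂.lam + t₃.lam ≠ 0) :
    Lmap t₁ (T9 t₂ t₃) (x ⊗ₜ L'map t₂ t₃ (y ⊗ₜ z)) =
      (-(sgn t₂.sg * t₁.lam / (t₁.lam + t₂.lam))) •
          Lmap (T7 t₁ t₂) t₃ (L'map t₁ t₂ (x ⊗ₜ y) ⊗ₜ z)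
        + L'map (T4 t₁ t₂) t₃ (Lmap t₁ t₂ (x ⊗ₜ y) ⊗ₜ z) := by
  rw [Lmap_tmul_L'map_tmul, Lmap_L'map_tmul_tmul, L'map_Lmap_tmul_tmul]
  simp only [Prod.smul_mk, Prod.mk_add_mk, smul_eq_mul]
  rcases sgn_eq_one_or_neg_one t₂.sg with hs | hs <;> rw [hs] <;> ext <;> field

theorem L'map_tmul_Lmap_tmul_eq_add (h₁₂ : t₁.lam + t₂.lam ≠ 0)
    (h₂₃ : t₂.lam + t₃.lam ≠ 0) (h₁₂₃ : t₁.lam + t₂.lam + t₃.lam ≠ 0) :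
    L'map t₁ (T6 t₂ t₃) (x ⊗ₜ Lmap t₂ t₃ (y ⊗ₜ z)) =
      kap t₁ t₂ t₃ • Lmap (T7 t₁ t₂) t₃ (L'map t₁ t₂ (x ⊗ₜ y) ⊗ₜ z)
        + (sgn t₂.sg * t₃.lam / (t₂.lam + t₃.lam)) •
          L'map (T4 t₁ t₂) t₃ (Lmap t₁ t₂ (x ⊗ₜ y) ⊗ₜ z) := by
  rw [L'map_tmul_Lmap_tmul, Lmap_L'map_tmul_tmul, L'map_Lmap_tmul_tmul, kap]
  simp only [Prod.smul_mk, Prod.mk_add_mk, smul_eq_mul]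
  rcases sgn_eq_one_or_neg_one t₂.sg with hs | hs <;> rw [hs] <;> ext <;> field

end TripleTensor

/-- Corollary 25: change of dual bases in
Hom(V_{t₁}⊗V_{t₂}⊗V_{t₃}, V_{t₈}). -/
theorem stmt13 (t₁ t₂ t₃ : Triple)
    (h₁ : t₁.lam ≠ 0) (h₂ : t₂.lam ≠ 0) (h₃ : t₃.lam ≠ 0)
    (h₁₂ : t₁.lam + t₂.lam ≠ 0) (h₂₃ : t₂.lam + t₃.lam ≠ 0)
    (h₁₂₃ : t₁.lam + t₂.lam + t₃.lam ≠ 0) :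
    Lmap t₁ (T9 t₂ t₃) ∘ₗ TensorProduct.map LinearMap.id (L'map t₂ t₃) =
      (-(sgn t₂.sg * t₁.lam / (t₁.lam + t₂.lam))) •
        (Lmap (T7 t₁ t₂) t₃ ∘ₗ TensorProduct.map (L'map t₁ t₂) LinearMap.id
          ∘ₗ (TensorProduct.assoc ℚ V V V).symm.toLinearMap)
      + (L'map (T4 t₁ t₂) t₃ ∘ₗ TensorProduct.map (Lmap t₁ t₂) LinearMap.id
          ∘ₗ (TensorProduct.assoc ℚ V V V).symm.toLinearMap) ∧
    L'map t₁ (T6 t₂ t₃) ∘ₗ TensorProduct.map LinearMap.id (Lmap t₂ t₃) =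
      kap t₁ t₂ t₃ •
        (Lmap (T7 t₁ t₂) t₃ ∘ₗ TensorProduct.map (L'map t₁ t₂) LinearMap.id
          ∘ₗ (TensorProduct.assoc ℚ V V V).symm.toLinearMap)
      + (sgn t₂.sg * t₃.lam / (t₂.lam + t₃.lam)) •
        (L'map (T4 t₁ t₂) t₃ ∘ₗ TensorProduct.map (Lmap t₁ t₂) LinearMap.id
          ∘ₗ (TensorProduct.assoc ℚ V V V).symm.toLinearMap) := by
  constructor
  · exact TensorProduct.ext_threefold' fun x y z =>
      Lmap_tmul_L'map_tmul_eq_add x y z h₁₂ h₁₂₃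
  · exact TensorProduct.ext_threefold' fun x y z =>
      L'map_tmul_Lmap_tmul_eq_add x y z h₁₂ h₂₃ h₁₂₃

end
end
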